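/- The vectors u_α and ᵗu_β obey the linear shift relations ũ_α = −u₀·Ṽ_α + χ_{α,δ}(ξ)·u_α and ᵗu_β = W_β·ᵗũ₀ − χ_{β,−δ}(ξ+δ)·ᵗũ_β, where tilde denotes evaluation at (n+1,m,h); the analogous relations hold with (tilde, δ) replaced by (hat, ε) and by (bar, λ). -/

import Mathlib

open scoped BigOperators

noncomputable section

/-- A period lattice in `ℂ` spanned by two `ℝ`-independent periods. -/
structure EllLattice where
  ω₁ : ℂ
  ω₂ : ℂ
  indep : ∀ a b : ℝ, a • ω₁ + b • ω₂ = 0 → a = 0 ∧ b = 0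

namespace EllLattice

/-- Membership in the lattice `Λ = ℤω₁ + ℤω₂`. -/
def mem (L : EllLattice) (z : ℂ) : Prop := ∃ m n : ℤ, z = m • L.ω₁ + n • L.ω₂

/-- The lattice point with integer coordinates `p = (m, n)`. -/
def per (L : EllLattice) (p : ℤ × ℤ) : ℂ := p.1 • L.ω₁ + p.2 • L.ω₂

/-- The Weierstrass sigma function associated to the lattice, defined by its
Hadamard product over the nonzero lattice points. -/
def sigma (L : EllLattice) (z : ℂ) : ℂ :=
  z * ∏' p : {p : ℤ × ℤ // p ≠ 0},
      ((1 - z / L.per p.1) *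
        Complex.exp (z / L.per p.1 + z ^ 2 / (2 * (L.per p.1) ^ 2)))

/-- The Weierstrass zeta function `ζ = σ′/σ`. -/
def zeta (L : EllLattice) (z : ℂ) : ℂ := deriv L.sigma z / L.sigma z

/-- The Weierstrass `℘`-function `℘ = −ζ′`. -/
def wp (L : EllLattice) (z : ℂ) : ℂ := - deriv L.zeta z

/-- `Φ_ξ(κ) = σ(ξ+κ)/(σ(ξ)σ(κ))`. -/
def Phi (L : EllLattice) (ξ κ : ℂ) : ℂ := L.sigma (ξ + κ) / (L.sigma ξ * L.sigma κ)

/-- The Lamé function `Ψ_ξ(κ) = Φ_ξ(κ)·e^{−ζ(ξ)κ}`. -/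
def Psi (L : EllLattice) (ξ κ : ℂ) : ℂ := L.Phi ξ κ * Complex.exp (-(L.zeta ξ) * κ)

/-- `η_δ(ξ) = ζ(ξ+δ) − ζ(ξ) − ζ(δ)`. -/
def eta (L : EllLattice) (δ ξ : ℂ) : ℂ := L.zeta (ξ + δ) - L.zeta ξ - L.zeta δ

/-- `χ_{α,β}(ξ) = ζ(α) + ζ(β) + ζ(ξ) − ζ(ξ+α+β)`. -/
def chi (L : EllLattice) (α β ξ : ℂ) : ℂ :=
  L.zeta α + L.zeta β + L.zeta ξ - L.zeta (ξ + α + β)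

end EllLattice

open Matrix

/-- All the data entering the elliptic (N,N′)-soliton solutions of the lattice KP system:
a period lattice, lattice parameters `δ, ε, λ`, a base point `ξ₀`, rapidity parameters
`κ_i, κ′_j`, initial plane-wave constants `ρ⁰_i, ν⁰_j` and a constant `N′×N` matrix `C`. -/
structure KPData (N N' : ℕ) where
  L : EllLattice
  del : ℂ
  eps : ℂ
  lam : ℂ
  xi0 : ℂ
  κ : Fin N → ℂ
  κ' : Fin N' → ℂ
  ρ0 : Fin N → ℂ
  ν0 : Fin N' → ℂ
  C : Matrix (Fin N') (Fin N) ℂ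

namespace KPData

variable {N N' : ℕ}

/-- `ξ = ξ₀ + nδ + mε + hλ`. -/
def xi (D : KPData N N') (n m h : ℤ) : ℂ :=
  D.xi0 + n • D.del + m • D.eps + h • D.lam

/-- The plane-wave factor `ρ_i(n,m,h)`. -/
def ρ (D : KPData N N') (i : Fin N) (n m h : ℤ) : ℂ :=
  (Complex.exp (-(D.L.zeta D.del) * D.κ i) * D.L.Psi D.del (-(D.κ i))) ^ n *
  (Complex.exp (-(D.L.zeta D.eps) * D.κ i) * D.L.Psi D.eps (-(D.κ i))) ^ m *
  (Complex.exp (-(D.L.zeta D.lam) * D.κ i) * D.L.Psi D.lam (-(D.κ i))) ^ h *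
  Complex.exp (D.L.zeta (D.xi n m h) * D.κ i) * D.ρ0 i

/-- The plane-wave factor `ν_j(n,m,h)`. -/
def ν (D : KPData N N') (j : Fin N') (n m h : ℤ) : ℂ :=
  (Complex.exp (D.L.zeta D.del * D.κ' j) * D.L.Psi D.del (D.κ' j)) ^ (-n) *
  (Complex.exp (D.L.zeta D.eps * D.κ' j) * D.L.Psi D.eps (D.κ' j)) ^ (-m) *
  (Complex.exp (D.L.zeta D.lam * D.κ' j) * D.L.Psi D.lam (D.κ' j)) ^ (-h) *
  Complex.exp (D.L.zeta (D.xi n m h) * D.κ' j) * D.ν0 j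

/-- The dressed elliptic Cauchy matrix `M_{ij} = ρ_i Ψ_ξ(κ_i + κ′_j) ν_j`. -/
def M (D : KPData N N') (n m h : ℤ) : Matrix (Fin N) (Fin N') ℂ :=
  Matrix.of fun i j => D.ρ i n m h * D.L.Psi (D.xi n m h) (D.κ i + D.κ' j) * D.ν j n m h

/-- The column vector `r = (ρ_i Ψ_ξ(κ_i))_i`. -/
def r (D : KPData N N') (n m h : ℤ) : Fin N → ℂ :=
  fun i => D.ρ i n m h * D.L.Psi (D.xi n m h) (D.κ i)

/-- The column vector `s = (ν_j Ψ_ξ(κ′_j))_j`. -/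
def s (D : KPData N N') (n m h : ℤ) : Fin N' → ℂ :=
  fun j => D.ν j n m h * D.L.Psi (D.xi n m h) (D.κ' j)

/-- The τ-function `τ = det(1 + MC)`. -/
def τ (D : KPData N N') (n m h : ℤ) : ℂ := (1 + D.M n m h * D.C).det

/-- The diagonal matrix `χ_{α,K}(ξ) = diag(χ_{α,κ_i}(ξ))`. -/
def DK (D : KPData N N') (α : ℂ) (n m h : ℤ) : Matrix (Fin N) (Fin N) ℂ :=
  Matrix.diagonal fun i => D.L.chi α (D.κ i) (D.xi n m h)

/-- The diagonal matrix `χ_{β,K′}(ξ) = diag(χ_{β,κ′_j}(ξ))`. -/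
def DK' (D : KPData N N') (β : ℂ) (n m h : ℤ) : Matrix (Fin N') (Fin N') ℂ :=
  Matrix.diagonal fun j => D.L.chi β (D.κ' j) (D.xi n m h)

/-- `W_β = 1 − sᵀ (χ_{β,K′}(ξ))⁻¹ C (1+MC)⁻¹ r`. -/
def W (D : KPData N N') (β : ℂ) (n m h : ℤ) : ℂ :=
  1 - D.s n m h ⬝ᵥ ((D.DK' β n m h)⁻¹ *ᵥ (D.C *ᵥ ((1 + D.M n m h * D.C)⁻¹ *ᵥ D.r n m h)))

/-- `V_α = 1 − sᵀ (1+CM)⁻¹ C (χ_{α,K}(ξ))⁻¹ r`. -/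
def V (D : KPData N N') (α : ℂ) (n m h : ℤ) : ℂ :=
  1 - D.s n m h ⬝ᵥ ((1 + D.C * D.M n m h)⁻¹ *ᵥ (D.C *ᵥ ((D.DK α n m h)⁻¹ *ᵥ D.r n m h)))

/-- `w₀ = sᵀ C (1+MC)⁻¹ r`. -/
def w0 (D : KPData N N') (n m h : ℤ) : ℂ :=
  D.s n m h ⬝ᵥ (D.C *ᵥ ((1 + D.M n m h * D.C)⁻¹ *ᵥ D.r n m h))

/-- `w = ζ(ξ) − w₀ − nζ(δ) − mζ(ε) − hζ(λ)`. -/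
def w (D : KPData N N') (n m h : ℤ) : ℂ :=
  D.L.zeta (D.xi n m h) - D.w0 n m h - n • D.L.zeta D.del - m • D.L.zeta D.eps -
    h • D.L.zeta D.lam

/-- `S_{β,α} = sᵀ (χ_{β,K′}(ξ))⁻¹ C (1+MC)⁻¹ (χ_{α,K}(ξ))⁻¹ r`. -/
def S (D : KPData N N') (β α : ℂ) (n m h : ℤ) : ℂ :=
  D.s n m h ⬝ᵥ ((D.DK' β n m h)⁻¹ *ᵥ
    (D.C *ᵥ ((1 + D.M n m h * D.C)⁻¹ *ᵥ ((D.DK α n m h)⁻¹ *ᵥ D.r n m h))))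

/-- `u_α = (1+MC)⁻¹ (χ_{α,K}(ξ))⁻¹ r`. -/
def u (D : KPData N N') (α : ℂ) (n m h : ℤ) : Fin N → ℂ :=
  (1 + D.M n m h * D.C)⁻¹ *ᵥ ((D.DK α n m h)⁻¹ *ᵥ D.r n m h)

/-- `u₀ = (1+MC)⁻¹ r`. -/
def u0 (D : KPData N N') (n m h : ℤ) : Fin N → ℂ :=
  (1 + D.M n m h * D.C)⁻¹ *ᵥ D.r n m h

/-- the adjoint (row) vector `ᵗu_β = sᵀ (χ_{β,K′}(ξ))⁻¹ (1+CM)⁻¹`. -/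
def tu (D : KPData N N') (β : ℂ) (n m h : ℤ) : Fin N' → ℂ :=
  (D.s n m h ᵥ* (D.DK' β n m h)⁻¹) ᵥ* (1 + D.C * D.M n m h)⁻¹

/-- the adjoint (row) vector `ᵗu₀ = sᵀ (1+CM)⁻¹`. -/
def tu0 (D : KPData N N') (n m h : ℤ) : Fin N' → ℂ :=
  D.s n m h ᵥ* (1 + D.C * D.M n m h)⁻¹

/-- The gauge variable `𝒱_α = Φ_ξ(α)·V_α`. -/
def calV (D : KPData N N') (α : ℂ) (n m h : ℤ) : ℂ :=
  D.L.Phi (D.xi n m h) α * D.V α n m h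

/-- The gauge variable `𝒲_β = Φ_ξ(β)·W_β`. -/
def calW (D : KPData N N') (β : ℂ) (n m h : ℤ) : ℂ :=
  D.L.Phi (D.xi n m h) β * D.W β n m h

/-- The Schwarzian variable `Z_{β,α} = Φ_ξ(α+β)·(1 − χ_{α,β}(ξ)·S_{β,α})`. -/
def Z (D : KPData N N') (β α : ℂ) (n m h : ℤ) : ℂ :=
  D.L.Phi (D.xi n m h) (α + β) * (1 - D.L.chi α β (D.xi n m h) * D.S β α n m h)

/-- Genericity of the parameters (together with finitely many auxiliary points `extra`):
no nontrivial integer combination of `ξ₀, δ, ε, λ`, the rapidity parameters and the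
auxiliary points lies on the lattice.  In particular all arguments of `σ` occurring in
the soliton solutions and their shifts lie outside `Λ`. -/
def Generic {P : ℕ} (D : KPData N N') (extra : Fin P → ℂ) : Prop :=
  ∀ (c0 cn cm ch : ℤ) (a : Fin N → ℤ) (b : Fin N' → ℤ) (e : Fin P → ℤ),
    ¬ (c0 = 0 ∧ cn = 0 ∧ cm = 0 ∧ ch = 0 ∧ a = 0 ∧ b = 0 ∧ e = 0) →
    ¬ D.L.mem (c0 • D.xi0 + cn • D.del + cm • D.eps + ch • D.lam +
      (∑ i, a i • D.κ i) + (∑ j, b j • D.κ' j) + ∑ t, e t • extra t)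

end KPData


namespace EllLattice

open Filter Topology

lemma E2_bound (w : ℂ) (hw : ‖w‖ ≤ 1) :
    ‖(1 - w) * Complex.exp (w + w ^ 2 / 2) - 1‖ ≤ Real.exp 2 * ‖w‖ ^ 3 := by
  have hd : ∀ x : ℂ, HasDerivAt (fun w : ℂ => (1 - w) * Complex.exp (w + w ^ 2 / 2))
      (-x ^ 2 * Complex.exp (x + x ^ 2 / 2)) x := by
    intro x
    have h1 : HasDerivAt (fun w : ℂ => 1 - w) (-1) x := by
      simpa using (hasDerivAt_id x).const_sub 1
    have h2 : HasDerivAt (fun w : ℂ => w + w ^ 2 / 2) (1 + x) x := by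
      have h3 := (hasDerivAt_id' x).fun_add ((hasDerivAt_pow 2 x).div_const 2)
      have e : (1 : ℂ) + ((2 : ℕ) : ℂ) * x ^ (2 - 1) / 2 = 1 + x := by simp
      rw [e] at h3
      exact h3
    have h4 := h1.fun_mul h2.cexp
    have e : -1 * Complex.exp (x + x ^ 2 / 2) + (1 - x) * (Complex.exp (x + x ^ 2 / 2) * (1 + x))
      = -x ^ 2 * Complex.exp (x + x ^ 2 / 2) := by ring
    rw [e] at h4
    exact h4
  have hb : ∀ x ∈ Metric.closedBall (0 : ℂ) ‖w‖,
      ‖-x ^ 2 * Complex.exp (x + x ^ 2 / 2)‖ ≤ Real.exp 2 * ‖w‖ ^ 2 := by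
    intro x hx
    have hx' : ‖x‖ ≤ ‖w‖ := by simpa using hx
    rw [norm_mul, norm_neg, norm_pow, mul_comm]
    have h3 : ‖Complex.exp (x + x ^ 2 / 2)‖ ≤ Real.exp 2 := by
      refine (Complex.norm_exp_le_exp_norm _).trans (Real.exp_le_exp.mpr ?_)
      refine (norm_add_le _ _).trans ?_
      rw [norm_div, norm_pow]
      have : ‖x‖ ^ 2 ≤ 1 := by
        have := hx'.trans hw
        nlinarith [norm_nonneg x]
      simp only [Complex.norm_ofNat]
      linarith [hx'.trans hw]
    gcongr
  have := (convex_closedBall (0 : ℂ) ‖w‖).norm_image_sub_le_of_norm_hasDerivWithin_le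
    (fun x _ => (hd x).hasDerivWithinAt) hb (x := 0) (y := w) (by simp) (by simp)
  simp only [sub_zero] at this
  calc _ ≤ _ := by simpa using this
    _ = _ := by ring

/-- The associated Mathlib period pair. -/
def PP (L : EllLattice) : PeriodPair where
  ω₁ := L.ω₁
  ω₂ := L.ω₂
  indep := by
    rw [LinearIndependent.pair_iff]
    exact L.indep

lemma mem_iff (L : EllLattice) (z : ℂ) : L.mem z ↔ z ∈ L.PP.lattice := by
  rw [PeriodPair.mem_lattice]
  simp only [mem, PP, zsmul_eq_mul]
  constructor
  · rintro ⟨m, n, h⟩; exact ⟨m, n, h.symm⟩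
  · rintro ⟨m, n, h⟩; exact ⟨m, n, h.symm⟩

lemma per_eq (L : EllLattice) (p : ℤ × ℤ) : L.per p = (L.PP.latticeEquivProd.symm p).1 := by
  rw [PeriodPair.latticeEquiv_symm_apply]
  simp [per, PP]

lemma per_mem (L : EllLattice) (p : ℤ × ℤ) : L.per p ∈ L.PP.lattice := by
  rw [per_eq]; exact Subtype.property _

lemma per_ne_zero (L : EllLattice) {p : ℤ × ℤ} (hp : p ≠ 0) : L.per p ≠ 0 := by
  rw [per_eq]
  simpa using hp

lemma per_neg (L : EllLattice) (p : ℤ × ℤ) : L.per (-p) = - L.per p := by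
  simp [per]; ring

abbrev Idx := {p : ℤ × ℤ // p ≠ 0}

/-- The elementary factor. -/
def fac (L : EllLattice) (p : Idx) (z : ℂ) : ℂ :=
  (1 - z / L.per p.1) * Complex.exp (z / L.per p.1 + z ^ 2 / (2 * (L.per p.1) ^ 2))

/-- The product in the sigma function. -/
def prd (L : EllLattice) (z : ℂ) : ℂ := ∏' p : Idx, L.fac p z

lemma sigma_eq (L : EllLattice) (z : ℂ) : L.sigma z = z * L.prd z := rfl

lemma summable_per (L : EllLattice) : Summable fun p : Idx => ‖L.per p.1‖ ^ (-3 : ℝ) := by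
  have h := ZLattice.summable_norm_rpow L.PP.lattice (-3) (by simp; norm_num)
  have h2 := (L.PP.latticeEquivProd.symm.toEquiv.summable_iff).mpr h
  have h3 := h2.subtype {p : ℤ × ℤ | p ≠ 0}
  refine h3.congr ?_
  intro p
  simp [per_eq]

lemma eventually_per (L : EllLattice) (R : ℝ) : ∀ᶠ p : Idx in cofinite, R ≤ ‖L.per p.1‖ := by
  have h1 : {l : L.PP.lattice | ‖l‖ < R}.Finite :=
    (isCompact_iff_finite.mp (isCompact_closedBall (0 : L.PP.lattice) R)).subset
      (fun l hl => by simpa using (le_of_lt hl))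
  have h2 : Function.Injective fun p : Idx => L.PP.latticeEquivProd.symm p.1 :=
    L.PP.latticeEquivProd.symm.injective.comp Subtype.val_injective
  have h3 := h1.preimage h2.injOn
  rw [eventually_cofinite]
  refine h3.subset ?_
  intro p hp
  simp only [not_le, Set.mem_ofPred_eq] at hp
  rw [per_eq] at hp
  exact hp

lemma fac_bound (L : EllLattice) (R : ℝ) (hR : 0 < R) : ∀ᶠ p : Idx in cofinite,
    ∀ x ∈ Metric.ball (0 : ℂ) R,
      ‖L.fac p x - 1‖ ≤ Real.exp 2 * R ^ 3 * ‖L.per p.1‖ ^ (-3 : ℝ) := by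
  filter_upwards [L.eventually_per R] with p hp x hx
  have hx' : ‖x‖ < R := by simpa using hx
  have hpos : 0 < ‖L.per p.1‖ := lt_of_lt_of_le hR hp
  have h := E2_bound (x / L.per p.1) (by
    rw [norm_div, div_le_one hpos]; linarith)
  have e : L.fac p x = (1 - x / L.per p.1) *
      Complex.exp (x / L.per p.1 + (x / L.per p.1) ^ 2 / 2) := by
    unfold fac
    congr 3
    rw [div_pow, div_div, mul_comm]
  rw [e]
  refine h.trans ?_
  rw [norm_div, div_pow, mul_assoc, div_eq_mul_inv]
  have : ‖L.per p.1‖ ^ (-3 : ℝ) = (‖L.per p.1‖ ^ 3)⁻¹ := by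
    rw [Real.rpow_neg hpos.le]; norm_cast
  rw [this]
  gcongr

lemma fac_differentiable (L : EllLattice) (p : Idx) : Differentiable ℂ (L.fac p) := by
  unfold fac
  simp only [div_eq_mul_inv]
  fun_prop

lemma prd_tendsto (L : EllLattice) : TendstoLocallyUniformlyOn
    (fun (s : Finset Idx) (z : ℂ) => ∏ p ∈ s, L.fac p z) L.prd atTop Set.univ := by
  have key : ∀ R : ℝ, 0 < R → TendstoLocallyUniformlyOn
    (fun (s : Finset Idx) (z : ℂ) => ∏ p ∈ s, L.fac p z) L.prd atTop (Metric.ball 0 R) := by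
    intro R hR
    have := Summable.hasProdLocallyUniformlyOn_one_add (f := fun (p : Idx) x => L.fac p x - 1)
      (K := Metric.ball (0 : ℂ) R) Metric.isOpen_ball
      (L.summable_per.mul_left (Real.exp 2 * R ^ 3)) (L.fac_bound R hR)
      (fun p => ((L.fac_differentiable p).continuous.sub continuous_const).continuousOn)
    simp only [HasProdLocallyUniformlyOn, add_sub_cancel] at this
    exact this
  intro u hu x _
  have hxR : x ∈ Metric.ball (0 : ℂ) (‖x‖ + 1) := by simp
  obtain ⟨t, ht, h⟩ := key (‖x‖ + 1) (by positivity) u hu x hxR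
  refine ⟨t, ?_, h⟩
  rw [nhdsWithin_univ]
  rwa [Metric.isOpen_ball.nhdsWithin_eq hxR] at ht

lemma fac_summable (L : EllLattice) (z : ℂ) : Summable fun p : Idx => ‖L.fac p z - 1‖ := by
  have hu := L.summable_per.mul_left (Real.exp 2 * (‖z‖ + 1) ^ 3)
  refine hu.of_norm_bounded_eventually ?_
  filter_upwards [L.fac_bound (‖z‖ + 1) (by positivity)] with p hp
  simpa using hp z (by simp)

lemma prd_differentiable (L : EllLattice) : Differentiable ℂ L.prd := by
  rw [← differentiableOn_univ]
  refine L.prd_tendsto.differentiableOn (Eventually.of_forall fun s => ?_) isOpen_univ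
  exact DifferentiableOn.fun_finsetProd fun p _ => (L.fac_differentiable p).differentiableOn

lemma fac_ne_zero (L : EllLattice) (p : Idx) {z : ℂ} (hz : z ≠ L.per p.1) : L.fac p z ≠ 0 := by
  unfold fac
  refine mul_ne_zero ?_ (Complex.exp_ne_zero _)
  rw [sub_ne_zero]
  intro h
  exact hz ((div_eq_one_iff_eq (L.per_ne_zero p.2)).mp h.symm)

lemma prd_ne_zero_of (L : EllLattice) {z : ℂ} (hz : ∀ p : Idx, z ≠ L.per p.1) : L.prd z ≠ 0 := by
  have := tprod_one_add_ne_zero_of_summable (f := fun p : Idx => L.fac p z - 1)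
    (fun p => by simpa using L.fac_ne_zero p (hz p)) (L.fac_summable z)
  simpa [prd] using this

lemma prd_zero (L : EllLattice) : L.prd 0 = 1 := by
  simp [prd, fac]

lemma prd_neg (L : EllLattice) (z : ℂ) : L.prd (-z) = L.prd z := by
  unfold prd
  let e : Idx ≃ Idx := (Equiv.neg (ℤ × ℤ)).subtypeEquiv (by simp)
  rw [← e.tprod_eq]
  refine tprod_congr fun p => ?_
  have : L.per (e p).1 = - L.per p.1 := L.per_neg _
  simp only [fac, this, neg_div_neg_eq, even_two, Even.neg_pow]

lemma sigma_neg (L : EllLattice) (z : ℂ) : L.sigma (-z) = - L.sigma z := by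
  simp [sigma_eq, prd_neg]

lemma sigma_differentiable (L : EllLattice) : Differentiable ℂ L.sigma :=
  differentiable_id.mul L.prd_differentiable

lemma sigma_zero (L : EllLattice) : L.sigma 0 = 0 := by simp [sigma_eq]

lemma deriv_sigma_zero (L : EllLattice) : deriv L.sigma 0 = 1 := by
  have := (hasDerivAt_id (0 : ℂ)).mul (L.prd_differentiable 0).hasDerivAt
  have h2 : HasDerivAt L.sigma (1 * L.prd 0 + id (0 : ℂ) * deriv L.prd 0) 0 := this
  rw [h2.deriv]; simp [prd_zero]

lemma sigma_ne_zero (L : EllLattice) {z : ℂ} (hz : ¬ L.mem z) : L.sigma z ≠ 0 := by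
  rw [mem_iff] at hz
  refine mul_ne_zero (fun h => hz (h ▸ zero_mem _)) (L.prd_ne_zero_of fun p h => hz ?_)
  rw [h]; exact L.per_mem _

end EllLattice

namespace EllLattice

open Filter Topology

lemma deriv_logDeriv_eq {f : ℂ → ℂ} (hf : Differentiable ℂ f) {z : ℂ} (hz : f z ≠ 0) :
    HasDerivAt (logDeriv f) ((deriv (deriv f) z * f z - deriv f z * deriv f z) / f z ^ 2) z := by
  have h1 : HasDerivAt (deriv f) (deriv (deriv f) z) z :=
    (hf.contDiff (n := 2)).differentiable_deriv_two z |>.hasDerivAt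
  exact h1.div (hf z).hasDerivAt hz

lemma logDeriv_fac (L : EllLattice) (p : Idx) {z : ℂ} (hz : z ≠ L.per p.1) :
    logDeriv (L.fac p) z = 1 / (z - L.per p.1) + 1 / L.per p.1 + z / L.per p.1 ^ 2 := by
  have hl := L.per_ne_zero p.2
  have h1 : HasDerivAt (fun w : ℂ => 1 - w / L.per p.1) (-(1 / L.per p.1)) z :=
    ((hasDerivAt_id' z).div_const _).const_sub 1
  have h2 := (((hasDerivAt_id' z).div_const (L.per p.1)).fun_add
      ((hasDerivAt_pow 2 z).div_const (2 * L.per p.1 ^ 2))).cexp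
  have h3 := (h1.fun_mul h2).deriv
  have h4 : z - L.per p.1 ≠ 0 := sub_ne_zero.mpr hz
  have h5 : L.per p.1 - z ≠ 0 := sub_ne_zero.mpr hz.symm
  have h6 : 1 - z / L.per p.1 ≠ 0 := by
    rw [one_sub_div hl]; exact div_ne_zero h5 hl
  have h7 := Complex.exp_ne_zero (z / L.per p.1 + z ^ 2 / (2 * L.per p.1 ^ 2))
  have h8 : deriv (L.fac p) z = _ := h3
  rw [logDeriv_apply, h8]
  unfold fac
  generalize Complex.exp (z / L.per p.1 + z ^ 2 / (2 * L.per p.1 ^ 2)) = E at *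
  generalize L.per p.1 = l at *
  rw [div_eq_iff (mul_ne_zero h6 h7)]
  field_simp
  push_cast
  ring

lemma hasDerivAt_logDeriv_fac (L : EllLattice) (p : Idx) {z : ℂ} (hz : z ∉ L.PP.lattice) :
    HasDerivAt (logDeriv (L.fac p)) (-(1 / (z - L.per p.1) ^ 2 - 1 / L.per p.1 ^ 2)) z := by
  have hne : z - L.per p.1 ≠ 0 := fun h => hz (by rw [sub_eq_zero.mp h]; exact L.per_mem _)
  have h1 := (((hasDerivAt_id' z).sub_const (L.per p.1)).fun_inv hne)
  have h2 := (h1.add_const (1 / L.per p.1)).fun_add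
    ((hasDerivAt_id' z).div_const (L.per p.1 ^ 2))
  have h3 : logDeriv (L.fac p) =ᶠ[𝓝 z]
      fun x => (x - L.per p.1)⁻¹ + 1 / L.per p.1 + x / L.per p.1 ^ 2 := by
    filter_upwards [L.PP.isClosed_lattice.isOpen_compl.mem_nhds hz] with x hx
    rw [L.logDeriv_fac p (fun h => hx (by rw [h]; exact L.per_mem _)), one_div]
  refine (h2.congr_of_eventuallyEq h3).congr_deriv ?_
  ring

lemma hasDerivAt_logDeriv_prd (L : EllLattice) {z : ℂ} (hz : z ∉ L.PP.lattice) :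
    HasDerivAt (logDeriv L.prd) (-(L.PP.weierstrassPExcept 0 z)) z := by
  have hne : ∀ x ∉ L.PP.lattice, ∀ p : Idx, x ≠ L.per p.1 :=
    fun x hx p h => hx (by rw [h]; exact L.per_mem _)
  have hP : L.prd z ≠ 0 := L.prd_ne_zero_of (hne z hz)
  have hd := deriv_logDeriv_eq L.prd_differentiable hP
  set F : Finset Idx → ℂ → ℂ := fun s z => ∏ p ∈ s, L.fac p z with hF
  have hFd : ∀ s, Differentiable ℂ (F s) := fun s =>
    Differentiable.fun_finsetProd fun p _ => L.fac_differentiable p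
  have t0 := L.prd_tendsto
  have t1 := t0.deriv (Eventually.of_forall fun s => (hFd s).differentiableOn) isOpen_univ
  have t2 := t1.deriv (Eventually.of_forall fun s =>
    ((hFd s).contDiff (n := 2)).differentiable_deriv_two.differentiableOn) isOpen_univ
  have l0 := t0.tendsto_at (Set.mem_univ z)
  have l1 := t1.tendsto_at (Set.mem_univ z)
  have l2 := t2.tendsto_at (Set.mem_univ z)
  have lim := ((l2.mul l0).sub (l1.mul l1)).div (l0.pow 2) (pow_ne_zero 2 hP)
  have hFz : ∀ x ∉ L.PP.lattice, ∀ s, F s x ≠ 0 := fun x hx s =>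
    Finset.prod_ne_zero_iff.mpr fun p _ => L.fac_ne_zero p (hne x hx p)
  have hs : ∀ s : Finset Idx,
      (deriv (deriv (F s)) z * F s z - deriv (F s) z * deriv (F s) z) / F s z ^ 2
        = ∑ p ∈ s, -(1 / (z - L.per p.1) ^ 2 - 1 / L.per p.1 ^ 2) := by
    intro s
    refine (deriv_logDeriv_eq (hFd s) (hFz z hz s)).unique ?_
    have h3 : logDeriv (F s) =ᶠ[𝓝 z] fun x => ∑ p ∈ s, logDeriv (L.fac p) x := by
      filter_upwards [L.PP.isClosed_lattice.isOpen_compl.mem_nhds hz] with x hx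
      exact logDeriv_prod (fun p _ => L.fac_ne_zero p (hne x hx p))
        (fun p _ => L.fac_differentiable p x)
    exact (HasDerivAt.fun_sum fun p _ => L.hasDerivAt_logDeriv_fac p hz).congr_of_eventuallyEq h3
  have hsum : HasSum (fun p : Idx => -(1 / (z - L.per p.1) ^ 2 - 1 / L.per p.1 ^ 2))
      (-(L.PP.weierstrassPExcept 0 z)) := by
    apply HasSum.neg
    have h := L.PP.hasSum_weierstrassPExcept 0 z
    have h2 := (L.PP.latticeEquivProd.symm.toEquiv.hasSum_iff).mpr h
    rw [← (Subtype.val_injective (p := fun p : ℤ × ℤ => p ≠ 0)).hasSum_iff] at h2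
    · refine h2.congr_fun ?_
      intro p
      have hp : (L.PP.latticeEquivProd.symm p.1).1 ≠ 0 := by
        rw [← per_eq]; exact L.per_ne_zero p.2
      simp only [Function.comp_apply, per_eq]
      symm
      exact if_neg hp
    · intro p hp
      have h0 : p = 0 := by
        by_contra h0
        exact hp ⟨⟨p, h0⟩, rfl⟩
      simp [h0]
  have lim2 : Tendsto (fun s : Finset Idx =>
      ∑ p ∈ s, -(1 / (z - L.per p.1) ^ 2 - 1 / L.per p.1 ^ 2)) atTop
      (𝓝 ((deriv (deriv L.prd) z * L.prd z - deriv L.prd z * deriv L.prd z) / L.prd z ^ 2)) := by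
    refine lim.congr fun s => ?_
    exact hs s
  rw [tendsto_nhds_unique lim2 hsum] at hd
  exact hd

lemma hasDerivAt_zeta (L : EllLattice) {z : ℂ} (hz : z ∉ L.PP.lattice) :
    HasDerivAt L.zeta (-(L.PP.weierstrassP z)) z := by
  have hz0 : z ≠ 0 := fun h => hz (h ▸ zero_mem _)
  have h1 : L.zeta =ᶠ[𝓝 z] fun x => x⁻¹ + logDeriv L.prd x := by
    filter_upwards [L.PP.isClosed_lattice.isOpen_compl.mem_nhds hz] with x hx
    have hx0 : x ≠ 0 := fun h => hx (h ▸ zero_mem _)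
    have := logDeriv_mul (f := fun x => x) (g := L.prd) x hx0
      (L.prd_ne_zero_of (fun p h => hx (by rw [h]; exact L.per_mem _)))
      differentiableAt_id (L.prd_differentiable x)
    have e : L.zeta x = logDeriv (fun x => x * L.prd x) x := rfl
    rw [e, this, logDeriv_id']
    simp
  refine (((hasDerivAt_inv hz0).add (L.hasDerivAt_logDeriv_prd hz)).congr_of_eventuallyEq
    h1).congr_deriv ?_
  have := L.PP.weierstrassPExcept_add 0 z
  simp only [ZeroMemClass.coe_zero, sub_zero] at this
  rw [← this]
  simp

lemma compl_preconnected (L : EllLattice) : IsPreconnected ((L.PP.lattice : Set ℂ)ᶜ) := by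
  have hc : (L.PP.lattice : Set ℂ).Countable := by
    have : Countable L.PP.lattice := L.PP.latticeEquivProd.toEquiv.countable_iff.mpr inferInstance
    exact this
  exact (hc.isConnected_compl_of_one_lt_rank (by simp [Complex.rank_real_complex])).isPreconnected

lemma compl_dense (L : EllLattice) : Dense ((L.PP.lattice : Set ℂ)ᶜ) := by
  have hc : (L.PP.lattice : Set ℂ).Countable := by
    have : Countable L.PP.lattice := L.PP.latticeEquivProd.toEquiv.countable_iff.mpr inferInstance
    exact this
  exact hc.dense_compl ℝ

lemma zeta_add (L : EllLattice) (ω : ℂ) (hω : ω ∈ L.PP.lattice) :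
    ∃ η : ℂ, ∀ z ∉ L.PP.lattice, L.zeta (z + ω) = L.zeta z + η := by
  have hmem : ∀ z ∉ L.PP.lattice, z + ω ∉ L.PP.lattice := fun z hz h => hz (by
    simpa using sub_mem h hω)
  have hd : ∀ z ∉ L.PP.lattice, HasDerivAt (fun z => L.zeta (z + ω) - L.zeta z) 0 z := by
    intro z hz
    refine (((L.hasDerivAt_zeta (hmem z hz)).comp_add_const z ω).fun_sub
      (L.hasDerivAt_zeta hz)).congr_deriv ?_
    have := L.PP.weierstrassP_add_coe z ⟨ω, hω⟩
    simp only at this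
    rw [this]; ring
  obtain ⟨η, hη⟩ := L.PP.isClosed_lattice.isOpen_compl.exists_is_const_of_deriv_eq_zero
    L.compl_preconnected (fun z hz => (hd z hz).differentiableAt.differentiableWithinAt)
    (fun z hz => (hd z hz).deriv)
  exact ⟨η, fun z hz => by rw [← hη z hz]; ring⟩

lemma sigma_add (L : EllLattice) (ω : ℂ) (hω : ω ∈ L.PP.lattice) :
    ∃ A η : ℂ, A ≠ 0 ∧ ∀ z, L.sigma (z + ω) = A * Complex.exp (η * z) * L.sigma z := by
  obtain ⟨η, hη⟩ := L.zeta_add ω hω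
  have hmem : ∀ z ∉ L.PP.lattice, z + ω ∉ L.PP.lattice := fun z hz h => hz (by
    simpa using sub_mem h hω)
  have hs : ∀ z ∉ L.PP.lattice, L.sigma z ≠ 0 := fun z hz =>
    L.sigma_ne_zero (by rwa [mem_iff])
  have hd : ∀ z ∉ L.PP.lattice,
      HasDerivAt (fun z => L.sigma (z + ω) * Complex.exp (-η * z) / L.sigma z) 0 z := by
    intro z hz
    have h1 := ((L.sigma_differentiable (z + ω)).hasDerivAt).comp_add_const z ω
    have h2 := ((hasDerivAt_id' z).const_mul (-η)).cexp
    refine ((h1.fun_mul h2).fun_div (L.sigma_differentiable z).hasDerivAt (hs z hz)).congr_deriv ?_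
    have h3 := hη z hz
    unfold zeta at h3
    have a1 := hs _ hz
    have a2 := hs _ (hmem z hz)
    have h4 : deriv L.sigma (z + ω) =
      (deriv L.sigma z / L.sigma z + η) * L.sigma (z + ω) := by
      rw [← h3]; field_simp
    rw [h4]
    field_simp
    ring
  obtain ⟨A, hA⟩ := L.PP.isClosed_lattice.isOpen_compl.exists_is_const_of_deriv_eq_zero
    L.compl_preconnected (fun z hz => (hd z hz).differentiableAt.differentiableWithinAt)
    (fun z hz => (hd z hz).deriv)
  refine ⟨A, η, ?_, ?_⟩
  · obtain ⟨z, hz⟩ := L.compl_dense.nonempty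
    rw [← hA z hz]
    exact div_ne_zero (mul_ne_zero (hs _ (hmem z hz)) (Complex.exp_ne_zero _)) (hs z hz)
  · have hc := L.sigma_differentiable.continuous
    have : (fun z => L.sigma (z + ω)) = fun z => A * Complex.exp (η * z) * L.sigma z := by
      refine Continuous.ext_on L.compl_dense (by fun_prop) (by fun_prop) ?_
      intro z hz
      have h := hA z hz
      have a1 := hs _ hz
      simp only
      rw [← h, neg_mul, Complex.exp_neg]
      have := Complex.exp_ne_zero (η * z)
      field_simp
    exact fun z => congrFun this z

lemma sigma_lattice (L : EllLattice) (ω : ℂ) (hω : ω ∈ L.PP.lattice) : L.sigma ω = 0 := by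
  obtain ⟨A, η, _, h⟩ := L.sigma_add ω hω
  have := h 0
  simpa [sigma_zero] using this

lemma deriv_sigma_lattice (L : EllLattice) (ω : ℂ) (hω : ω ∈ L.PP.lattice) :
    deriv L.sigma ω ≠ 0 := by
  obtain ⟨A, η, hA, h⟩ := L.sigma_add ω hω
  have h1 : HasDerivAt (fun z => L.sigma (z + ω)) (deriv L.sigma (0 + ω)) 0 :=
    ((L.sigma_differentiable (0 + ω)).hasDerivAt).comp_add_const 0 ω
  have h2 := ((((hasDerivAt_id' (0:ℂ)).const_mul η).cexp).const_mul A).fun_mul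
    (L.sigma_differentiable 0).hasDerivAt
  rw [funext h] at h1
  have := h1.unique h2
  simp only [zero_add, sigma_zero, deriv_sigma_zero, mul_zero, Complex.exp_zero, mul_one] at this
  rw [this]; exact hA

lemma sigma_eq_zero_iff (L : EllLattice) (z : ℂ) : L.sigma z = 0 ↔ z ∈ L.PP.lattice := by
  refine ⟨fun h => ?_, L.sigma_lattice z⟩
  by_contra h2
  exact L.sigma_ne_zero (by rwa [mem_iff]) h

end EllLattice

namespace EllLattice

open Filter Topology

/-- Liouville-type argument: two entire functions with the same quasi-periodicity factors,
where one has simple zeros contained in the zeros of the other, are proportional. -/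
lemma quot_const (L : EllLattice) (H K : ℂ → ℂ) (hH : Differentiable ℂ H)
    (hK : Differentiable ℂ K) (hz : ∀ z, K z = 0 → H z = 0 ∧ deriv K z ≠ 0)
    (hper : ∀ ω ∈ L.PP.lattice, ∃ E : ℂ → ℂ, ∀ z, E z ≠ 0 ∧ H (z + ω) = E z * H z ∧
      K (z + ω) = E z * K z) :
    ∃ c : ℂ, ∀ z, H z = c * K z := by
  classical
  set q : ℂ → ℂ := fun z => if K z = 0 then deriv H z / deriv K z else H z / K z with hq
  have hqd : Differentiable ℂ q := by
    intro z
    by_cases h0 : K z = 0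
    · obtain ⟨h1, h2⟩ := hz z h0
      have dH : Differentiable ℂ (dslope H z) := by
        rw [← differentiableOn_univ, Complex.differentiableOn_dslope univ_mem]
        exact hH.differentiableOn
      have dK : Differentiable ℂ (dslope K z) := by
        rw [← differentiableOn_univ, Complex.differentiableOn_dslope univ_mem]
        exact hK.differentiableOn
      have hne : dslope K z z ≠ 0 := by rwa [dslope_same]
      have hev : q =ᶠ[𝓝 z] fun x => dslope H z x / dslope K z x := by
        filter_upwards [dK.continuous.continuousAt.eventually_ne hne] with x hx
        by_cases hxz : x = z
        · subst hxz
          simp [hq, h0, dslope_same]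
        · have eH := sub_smul_dslope_of_zero h1 x
          have eK := sub_smul_dslope_of_zero h0 x
          have hsub : x - z ≠ 0 := sub_ne_zero.mpr hxz
          have hKx : K x ≠ 0 := by
            rw [← eK]; exact smul_ne_zero hsub hx
          simp only [hq, hKx, if_false]
          rw [← eH, ← eK, smul_eq_mul, smul_eq_mul, mul_div_mul_left _ _ hsub]
      exact ((dH z).fun_div (dK z) hne).congr_of_eventuallyEq hev
    · have hev : q =ᶠ[𝓝 z] fun x => H x / K x := by
        filter_upwards [hK.continuous.continuousAt.eventually_ne h0] with x hx
        simp [hq, hx]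
      exact ((hH z).fun_div (hK z) h0).congr_of_eventuallyEq hev
  have hdense : Dense {z | K z ≠ 0} := by
    intro z
    by_cases h0 : K z = 0
    · obtain ⟨-, h2⟩ := hz z h0
      have := (hK z).hasDerivAt.eventually_ne (c := 0) h2
      rw [mem_closure_iff_frequently]
      exact this.frequently.filter_mono nhdsWithin_le_nhds
    · exact subset_closure h0
  have hqper : ∀ z, ∀ ω ∈ L.PP.lattice, q (z + ω) = q z := by
    intro z ω hω
    obtain ⟨E, hE⟩ := hper ω hω
    have hc := hqd.continuous
    have : (fun z => q (z + ω)) = q := by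
      refine Continuous.ext_on hdense (by fun_prop) hc ?_
      intro x hx
      obtain ⟨e0, e1, e2⟩ := hE x
      have hx' : K x ≠ 0 := hx
      simp only [hq, e2, e1, hx', e0, mul_eq_zero, or_self, if_false]
      rw [mul_div_mul_left _ _ e0]
    exact congrFun this z
  have hb := (IsZLattice.isCompact_range_of_periodic L.PP.lattice q hqd.continuous hqper).isBounded
  refine ⟨q 0, fun z => ?_⟩
  have hqz := hqd.apply_eq_apply_of_bounded hb z 0
  by_cases h0 : K z = 0
  · rw [h0, (hz z h0).1, mul_zero]
  · rw [← hqz]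
    simp only [hq, h0, if_false]
    field_simp

lemma deriv_sigma_neg (L : EllLattice) (z : ℂ) : deriv L.sigma (-z) = deriv L.sigma z := by
  have h1 := deriv_comp_neg L.sigma z
  have h2 : (fun x => L.sigma (-x)) = fun x => - L.sigma x := funext L.sigma_neg
  rw [h2, deriv.fun_neg] at h1
  exact (neg_injective h1).symm

lemma chi_formula (L : EllLattice) (a b c : ℂ) (ha : ¬ L.mem a) (hb : ¬ L.mem b)
    (hab : ¬ L.mem (a - b)) (hc : ¬ L.mem c) (hs : ¬ L.mem (c + a + b)) :
    L.chi a b c = L.sigma (a + b) * L.sigma (c + a) * L.sigma (c + b) /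
      (L.sigma a * L.sigma b * L.sigma c * L.sigma (c + a + b)) := by
  have sa := L.sigma_ne_zero ha
  have sb := L.sigma_ne_zero hb
  have sc := L.sigma_ne_zero hc
  have ss := L.sigma_ne_zero hs
  rw [mem_iff] at hab
  have dσ := L.sigma_differentiable
  have dσ' : Differentiable ℂ (deriv L.sigma) := (dσ.contDiff (n := 2)).differentiable_deriv_two
  set H : ℂ → ℂ := fun z => (L.zeta a + L.zeta b) * L.sigma z * L.sigma (z + a + b) +
    deriv L.sigma z * L.sigma (z + a + b) - L.sigma z * deriv L.sigma (z + a + b) with hH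
  set K : ℂ → ℂ := fun z => L.sigma (z + a) * L.sigma (z + b) with hK
  have hper : ∀ ω ∈ L.PP.lattice, ∃ E : ℂ → ℂ, ∀ z, E z ≠ 0 ∧ H (z + ω) = E z * H z ∧
      K (z + ω) = E z * K z := by
    intro ω hω
    obtain ⟨A, η, hA, h⟩ := L.sigma_add ω hω
    have h' : ∀ z, deriv L.sigma (z + ω) =
        A * Complex.exp (η * z) * (deriv L.sigma z + η * L.sigma z) := by
      intro z
      have h1 : HasDerivAt (fun z => L.sigma (z + ω)) (deriv L.sigma (z + ω)) z :=
        ((dσ (z + ω)).hasDerivAt).comp_add_const z ω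
      have h2 := ((((hasDerivAt_id' z).const_mul η).cexp).const_mul A).fun_mul (dσ z).hasDerivAt
      rw [funext h] at h1
      rw [h1.unique h2]; ring
    refine ⟨fun z => A ^ 2 * (Complex.exp (η * z) ^ 2 * Complex.exp (η * a) *
      Complex.exp (η * b)), fun z => ⟨?_, ?_, ?_⟩⟩
    · simp [hA, Complex.exp_ne_zero]
    · have e : z + ω + a + b = (z + a + b) + ω := by ring
      simp only [hH, e, h, h', mul_add, Complex.exp_add]
      ring
    · have e1 : z + ω + a = (z + a) + ω := by ring
      have e2 : z + ω + b = (z + b) + ω := by ring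
      simp only [hK, e1, e2, h, mul_add, Complex.exp_add]
      ring
  have hHa : H (-a) = 0 := by
    simp only [hH, sigma_neg, deriv_sigma_neg, zeta, neg_add_cancel, zero_add]
    field_simp
    ring
  have hHb : H (-b) = 0 := by
    have e : -b + a + b = a := by ring
    simp only [hH, sigma_neg, deriv_sigma_neg, zeta, e]
    field_simp
    ring
  have hz : ∀ z, K z = 0 → H z = 0 ∧ deriv K z ≠ 0 := by
    intro z hz0
    have hd : HasDerivAt K (deriv L.sigma (z + a) * L.sigma (z + b) +
        L.sigma (z + a) * deriv L.sigma (z + b)) z :=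
      ((dσ (z + a)).hasDerivAt.comp_add_const z a).fun_mul
        ((dσ (z + b)).hasDerivAt.comp_add_const z b)
    rw [hd.deriv]
    rcases mul_eq_zero.mp hz0 with h | h
    · have hl := (L.sigma_eq_zero_iff _).mp h
      constructor
      · obtain ⟨E, hE⟩ := hper _ hl
        have := (hE (-a)).2.1
        rwa [hHa, mul_zero, neg_add_cancel_comm_assoc] at this
      · rw [h, zero_mul, add_zero]
        refine mul_ne_zero (L.deriv_sigma_lattice _ hl) ?_
        rw [Ne, sigma_eq_zero_iff]
        intro h2
        exact hab (by simpa using sub_mem hl h2)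
    · have hl := (L.sigma_eq_zero_iff _).mp h
      constructor
      · obtain ⟨E, hE⟩ := hper _ hl
        have := (hE (-b)).2.1
        rwa [hHb, mul_zero, neg_add_cancel_comm_assoc] at this
      · rw [h, mul_zero, zero_add]
        refine mul_ne_zero ?_ (L.deriv_sigma_lattice _ hl)
        rw [Ne, sigma_eq_zero_iff]
        intro h2
        exact hab (by simpa using sub_mem h2 hl)
  obtain ⟨k, hk⟩ := L.quot_const H K (by fun_prop) (by fun_prop) hz hper
  have h0 := hk 0
  simp only [hH, hK, sigma_zero, deriv_sigma_zero, zero_add, mul_zero, zero_mul, one_mul,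
    sub_zero] at h0
  have h1 := hk c
  have h2 : H c = L.chi a b c * (L.sigma c * L.sigma (c + a + b)) := by
    simp only [hH, chi]
    unfold zeta
    field_simp
  rw [h2] at h1
  rw [eq_div_iff (by simp [*])]
  rw [h0]
  simp only [hK] at h1
  linear_combination (L.sigma a * L.sigma b) * h1

/-- Integer independence of four points modulo the lattice. -/
def Ind4 (L : EllLattice) (ξ δ κ α : ℂ) : Prop :=
  ∀ a b c d : ℤ, ¬ (a = 0 ∧ b = 0 ∧ c = 0 ∧ d = 0) → ¬ L.mem (a • ξ + b • δ + c • κ + d • α)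

lemma Ind4.nm {L : EllLattice} {ξ δ κ α : ℂ} (h : L.Ind4 ξ δ κ α) (a b c d : ℤ) (z : ℂ)
    (hz : z = a * ξ + b * δ + c * κ + d * α) (h0 : ¬ (a = 0 ∧ b = 0 ∧ c = 0 ∧ d = 0)) :
    ¬ L.mem z := by
  rw [hz]
  simpa only [zsmul_eq_mul] using h a b c d h0

lemma chi_sub (L : EllLattice) (ξ δ κ α : ℂ) :
    L.chi α δ ξ - L.chi α κ ξ = L.chi δ (-κ) (ξ + α + κ) := by
  have e : L.zeta (-κ) = - L.zeta κ := by
    unfold zeta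
    rw [sigma_neg, deriv_sigma_neg, div_neg]
  have e2 : ξ + α + κ + δ + -κ = ξ + α + δ := by ring
  simp only [chi, e, e2]
  ring

lemma three_term (L : EllLattice) {ξ δ κ α : ℂ} (h : L.Ind4 ξ δ κ α) :
    L.sigma (α + δ) * L.sigma (ξ + δ) * L.sigma κ * L.sigma (ξ + α + κ) -
      L.sigma (α + κ) * L.sigma (ξ + κ) * L.sigma δ * L.sigma (ξ + α + δ) =
      - (L.sigma (δ - κ) * L.sigma (ξ + α + κ + δ) * L.sigma α * L.sigma ξ) := by
  have nα := h.nm 0 0 0 1 α (by push_cast; ring) (by simp)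
  have nκ := h.nm 0 0 1 0 κ (by push_cast; ring) (by simp)
  have nκ' := h.nm 0 0 (-1) 0 (-κ) (by push_cast; ring) (by simp)
  have nδ := h.nm 0 1 0 0 δ (by push_cast; ring) (by simp)
  have nξ := h.nm 1 0 0 0 ξ (by push_cast; ring) (by simp)
  have n1 := h.nm 0 (-1) 0 1 (α - δ) (by push_cast; ring) (by simp)
  have n2 := h.nm 0 0 (-1) 1 (α - κ) (by push_cast; ring) (by simp)
  have n3 := h.nm 0 1 1 0 (δ - -κ) (by push_cast; ring) (by simp)
  have n4 := h.nm 1 1 0 1 (ξ + α + δ) (by push_cast; ring) (by simp)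
  have n5 := h.nm 1 0 1 1 (ξ + α + κ) (by push_cast; ring) (by simp)
  have n6 := h.nm 1 1 0 1 (ξ + α + κ + δ + -κ) (by push_cast; ring) (by simp)
  have n7 := h.nm 1 0 0 1 (ξ + α) (by push_cast; ring) (by simp)
  have key := L.chi_sub ξ δ κ α
  rw [L.chi_formula _ _ _ nα nδ n1 nξ n4, L.chi_formula _ _ _ nα nκ n2 nξ n5,
    L.chi_formula _ _ _ nδ nκ' n3 n5 n6] at key
  have e2 : ξ + α + κ + δ + -κ = ξ + α + δ := by ring
  have e3 : ξ + α + κ + -κ = ξ + α := by ring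
  rw [e2, e3, ← sub_eq_add_neg, sigma_neg] at key
  have sα := L.sigma_ne_zero nα
  have sκ := L.sigma_ne_zero nκ
  have sδ := L.sigma_ne_zero nδ
  have sξ := L.sigma_ne_zero nξ
  have s4 := L.sigma_ne_zero n4
  have s5 := L.sigma_ne_zero n5
  have s7 := L.sigma_ne_zero n7
  rw [div_sub_div _ _ (by simp [*]) (by simp [*]), div_eq_div_iff (by simp [*]) (by simp [*])] at key
  have hne : L.sigma (ξ + α) * L.sigma α * L.sigma δ * L.sigma ξ * L.sigma κ *
    L.sigma (ξ + α + δ) * L.sigma (ξ + α + κ) ≠ 0 := by simp [*]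
  apply mul_left_cancel₀ hne
  linear_combination -key

lemma M_identity (L : EllLattice) {ξ δ κ κ' : ℂ} (h : L.Ind4 ξ δ κ κ') :
    L.Phi ξ (κ + κ') * L.Phi δ κ' - L.Phi δ (-κ) * L.Phi (ξ + δ) (κ + κ') =
      L.Phi ξ κ * L.Phi (ξ + δ) κ' := by
  have sκ' := L.sigma_ne_zero (h.nm 0 0 0 1 κ' (by push_cast; ring) (by simp))
  have sκ := L.sigma_ne_zero (h.nm 0 0 1 0 κ (by push_cast; ring) (by simp))
  have sδ := L.sigma_ne_zero (h.nm 0 1 0 0 δ (by push_cast; ring) (by simp))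
  have sξ := L.sigma_ne_zero (h.nm 1 0 0 0 ξ (by push_cast; ring) (by simp))
  have s1 := L.sigma_ne_zero (h.nm 1 1 0 0 (ξ + δ) (by push_cast; ring) (by simp))
  have s2 := L.sigma_ne_zero (h.nm 0 0 1 1 (κ + κ') (by push_cast; ring) (by simp))
  have key := L.three_term h
  have e1 : ξ + (κ + κ') = ξ + κ' + κ := by ring
  have e2 : ξ + δ + (κ + κ') = ξ + κ' + κ + δ := by ring
  have e3 : ξ + δ + κ' = ξ + κ' + δ := by ring
  have e4 : δ + -κ = δ - κ := by ring
  rw [add_comm κ' δ, add_comm κ' κ] at key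
  simp only [Phi, e1, e2, e3, e4, sigma_neg]
  field_simp
  linear_combination key

lemma r_identity (L : EllLattice) {ξ δ κ α : ℂ} (h : L.Ind4 ξ δ κ α)
    (h1 : L.chi α κ ξ ≠ 0) (h2 : L.chi α κ (ξ + δ) ≠ 0) :
    (L.chi α κ (ξ + δ))⁻¹ * (L.Phi δ (-κ) * L.Phi (ξ + δ) κ) =
      - L.Phi ξ κ + L.chi α δ ξ * ((L.chi α κ ξ)⁻¹ * L.Phi ξ κ) := by
  have nα := h.nm 0 0 0 1 α (by push_cast; ring) (by simp)
  have nκ := h.nm 0 0 1 0 κ (by push_cast; ring) (by simp)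
  have nκ' := h.nm 0 0 (-1) 0 (-κ) (by push_cast; ring) (by simp)
  have nδ := h.nm 0 1 0 0 δ (by push_cast; ring) (by simp)
  have nξ := h.nm 1 0 0 0 ξ (by push_cast; ring) (by simp)
  have nξδ := h.nm 1 1 0 0 (ξ + δ) (by push_cast; ring) (by simp)
  have n2 := h.nm 0 0 (-1) 1 (α - κ) (by push_cast; ring) (by simp)
  have n3 := h.nm 0 1 1 0 (δ - -κ) (by push_cast; ring) (by simp)
  have n4 := h.nm 1 1 0 1 (ξ + α + δ) (by push_cast; ring) (by simp)
  have n5 := h.nm 1 0 1 1 (ξ + α + κ) (by push_cast; ring) (by simp)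
  have n6 := h.nm 1 1 0 1 (ξ + α + κ + δ + -κ) (by push_cast; ring) (by simp)
  have n7 := h.nm 1 0 0 1 (ξ + α) (by push_cast; ring) (by simp)
  have n8 := h.nm 1 1 1 1 (ξ + δ + α + κ) (by push_cast; ring) (by simp)
  have n9 := h.nm 1 1 1 1 (ξ + α + κ + δ) (by push_cast; ring) (by simp)
  have n10 := h.nm 1 1 1 0 (ξ + δ + κ) (by push_cast; ring) (by simp)
  have n11 := h.nm 0 0 1 1 (α + κ) (by push_cast; ring) (by simp)
  have key := L.chi_sub ξ δ κ α
  have e : L.chi α δ ξ = L.chi δ (-κ) (ξ + α + κ) + L.chi α κ ξ := by rw [← key]; ring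
  have goal : L.chi α κ ξ * (L.Phi δ (-κ) * L.Phi (ξ + δ) κ) =
      L.chi α κ (ξ + δ) * (L.chi δ (-κ) (ξ + α + κ) * L.Phi ξ κ) := by
    rw [L.chi_formula _ _ _ nα nκ n2 nξ n5, L.chi_formula _ _ _ nα nκ n2 nξδ n8,
      L.chi_formula _ _ _ nδ nκ' n3 n5 n6]
    have e2 : ξ + α + κ + δ + -κ = ξ + α + δ := by ring
    have e3 : ξ + α + κ + -κ = ξ + α := by ring
    have e4 : ξ + δ + α + κ = ξ + α + κ + δ := by ring
    have e5 : ξ + δ + α = ξ + α + δ := by ring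
    have sα := L.sigma_ne_zero nα
    have sκ := L.sigma_ne_zero nκ
    have sδ := L.sigma_ne_zero nδ
    have sξ := L.sigma_ne_zero nξ
    have sξδ := L.sigma_ne_zero nξδ
    have s4 := L.sigma_ne_zero n4
    have s5 := L.sigma_ne_zero n5
    have s7 := L.sigma_ne_zero n7
    have s9 := L.sigma_ne_zero n9
    rw [e2, e3, e4, e5, ← sub_eq_add_neg, sigma_neg]
    simp only [Phi, ← sub_eq_add_neg, sigma_neg]
    field_simp
  rw [e]
  field_simp
  linear_combination goal

lemma s_identity (L : EllLattice) {ξ δ κ β : ℂ} (h : L.Ind4 ξ δ κ β)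
    (h1 : L.chi β κ ξ ≠ 0) (h2 : L.chi β κ (ξ + δ) ≠ 0) :
    L.Phi δ κ * L.Phi ξ κ * (L.chi β κ ξ)⁻¹ =
      L.Phi (ξ + δ) κ - L.chi β (-δ) (ξ + δ) * (L.Phi (ξ + δ) κ * (L.chi β κ (ξ + δ))⁻¹) := by
  have nβ := h.nm 0 0 0 1 β (by push_cast; ring) (by simp)
  have nκ := h.nm 0 0 1 0 κ (by push_cast; ring) (by simp)
  have nδ := h.nm 0 1 0 0 δ (by push_cast; ring) (by simp)
  have nξ := h.nm 1 0 0 0 ξ (by push_cast; ring) (by simp)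
  have nξδ := h.nm 1 1 0 0 (ξ + δ) (by push_cast; ring) (by simp)
  have n2 := h.nm 0 0 (-1) 1 (β - κ) (by push_cast; ring) (by simp)
  have n3 := h.nm 0 (-1) 1 0 (κ - δ) (by push_cast; ring) (by simp)
  have n4 := h.nm 1 0 0 1 (ξ + β) (by push_cast; ring) (by simp)
  have n5 := h.nm 1 0 1 1 (ξ + β + κ) (by push_cast; ring) (by simp)
  have n8 := h.nm 1 1 1 1 (ξ + δ + β + κ) (by push_cast; ring) (by simp)
  have n9 := h.nm 1 1 1 1 (ξ + β + κ + δ) (by push_cast; ring) (by simp)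
  have n10 := h.nm 1 1 0 1 (ξ + β + δ) (by push_cast; ring) (by simp)
  have e : L.chi β (-δ) (ξ + δ) = L.chi β κ (ξ + δ) - L.chi κ δ (ξ + β) := by
    have e1 : L.zeta (-δ) = - L.zeta δ := by
      unfold zeta
      rw [sigma_neg, deriv_sigma_neg, div_neg]
    have e2 : ξ + δ + β + -δ = ξ + β := by ring
    have e3 : ξ + δ + β + κ = ξ + β + κ + δ := by ring
    simp only [chi, e1, e2, e3]
    ring
  have goal : L.Phi δ κ * L.Phi ξ κ * L.chi β κ (ξ + δ) =
      L.chi β κ ξ * (L.chi κ δ (ξ + β) * L.Phi (ξ + δ) κ) := by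
    rw [L.chi_formula _ _ _ nβ nκ n2 nξ n5, L.chi_formula _ _ _ nβ nκ n2 nξδ n8,
      L.chi_formula _ _ _ nκ nδ n3 n4 n9]
    have e4 : ξ + δ + β + κ = ξ + β + κ + δ := by ring
    have e5 : ξ + δ + β = ξ + β + δ := by ring
    have sβ := L.sigma_ne_zero nβ
    have sκ := L.sigma_ne_zero nκ
    have sδ := L.sigma_ne_zero nδ
    have sξ := L.sigma_ne_zero nξ
    have sξδ := L.sigma_ne_zero nξδ
    have s4 := L.sigma_ne_zero n4
    have s5 := L.sigma_ne_zero n5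
    have s9 := L.sigma_ne_zero n9
    rw [e4, e5, add_comm κ δ]
    simp only [Phi]
    field_simp
  rw [e]
  field_simp
  linear_combination goal

end EllLattice

namespace KPData

section LinAlg

variable {N N' : ℕ}

lemma push_through (M : Matrix (Fin N) (Fin N') ℂ) (C : Matrix (Fin N') (Fin N) ℂ)
    (h : IsUnit (1 + M * C).det) :
    (1 + C * M)⁻¹ * C = C * (1 + M * C)⁻¹ := by
  have h' : IsUnit (1 + C * M).det := by rwa [Matrix.det_one_add_mul_comm]
  have e : (1 + C * M) * C = C * (1 + M * C) := by
    rw [Matrix.add_mul, Matrix.mul_add, Matrix.one_mul, Matrix.mul_one, Matrix.mul_assoc]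
  calc (1 + C * M)⁻¹ * C = (1 + C * M)⁻¹ * (C * (1 + M * C)) * (1 + M * C)⁻¹ := by
        rw [← Matrix.mul_assoc, Matrix.mul_assoc _ _ (1 + M * C)⁻¹, Matrix.mul_nonsing_inv _ h,
          Matrix.mul_one]
    _ = C * (1 + M * C)⁻¹ := by
        rw [← e, ← Matrix.mul_assoc, Matrix.nonsing_inv_mul _ h', Matrix.one_mul]

lemma lin_u (M M' : Matrix (Fin N) (Fin N') ℂ) (C : Matrix (Fin N') (Fin N) ℂ)
    (r x x' : Fin N → ℂ) (s' : Fin N' → ℂ) (c : ℂ)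
    (h : IsUnit (1 + M * C).det) (h' : IsUnit (1 + M' * C).det)
    (hM : M = M' + vecMulVec r s') (hx : x' = -r + c • x) :
    (1 + M' * C)⁻¹ *ᵥ x' =
      (-(1 - s' ⬝ᵥ ((1 + C * M')⁻¹ *ᵥ (C *ᵥ x')))) • ((1 + M * C)⁻¹ *ᵥ r) +
        c • ((1 + M * C)⁻¹ *ᵥ x) := by
  have e1 : (1 + C * M')⁻¹ *ᵥ (C *ᵥ x') = C *ᵥ ((1 + M' * C)⁻¹ *ᵥ x') := by
    rw [Matrix.mulVec_mulVec, push_through M' C h', ← Matrix.mulVec_mulVec]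
  rw [e1]
  set u' := (1 + M' * C)⁻¹ *ᵥ x' with hu
  have e2 : (1 + M' * C) *ᵥ u' = x' := by
    rw [hu, Matrix.mulVec_mulVec, Matrix.mul_nonsing_inv _ h', Matrix.one_mulVec]
  have e3 : (1 + M * C) *ᵥ u' = (-(1 - s' ⬝ᵥ (C *ᵥ u'))) • r + c • x := by
    have : (1 + M * C) *ᵥ u' = (1 + M' * C) *ᵥ u' + (s' ⬝ᵥ (C *ᵥ u')) • r := by
      rw [hM, Matrix.add_mul, ← add_assoc, Matrix.add_mulVec, ← Matrix.mulVec_mulVec _ _ C,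
        Matrix.vecMulVec_mulVec]
      simp
    rw [this, e2, hx]
    ext i
    simp only [Pi.add_apply, Pi.smul_apply, Pi.neg_apply, smul_eq_mul]
    ring
  have e4 : u' = (1 + M * C)⁻¹ *ᵥ ((1 + M * C) *ᵥ u') := by
    rw [Matrix.mulVec_mulVec, Matrix.nonsing_inv_mul _ h, Matrix.one_mulVec]
  rw [e3, Matrix.mulVec_add, Matrix.mulVec_smul, Matrix.mulVec_smul] at e4
  exact e4

lemma lin_tu (M M' : Matrix (Fin N) (Fin N') ℂ) (C : Matrix (Fin N') (Fin N) ℂ)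
    (r : Fin N → ℂ) (s' y y' : Fin N' → ℂ) (c : ℂ)
    (h : IsUnit (1 + M * C).det) (h' : IsUnit (1 + M' * C).det)
    (hM : M = M' + vecMulVec r s') (hy : y = s' - c • y') :
    y ᵥ* (1 + C * M)⁻¹ =
      (1 - y ⬝ᵥ (C *ᵥ ((1 + M * C)⁻¹ *ᵥ r))) • (s' ᵥ* (1 + C * M')⁻¹) -
        c • (y' ᵥ* (1 + C * M')⁻¹) := by
  have g : IsUnit (1 + C * M).det := by rwa [Matrix.det_one_add_mul_comm]
  have g' : IsUnit (1 + C * M').det := by rwa [Matrix.det_one_add_mul_comm]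
  have e1 : y ⬝ᵥ (C *ᵥ ((1 + M * C)⁻¹ *ᵥ r)) = (y ᵥ* (1 + C * M)⁻¹) ⬝ᵥ (C *ᵥ r) := by
    rw [Matrix.mulVec_mulVec, ← push_through M C h, ← Matrix.mulVec_mulVec,
      Matrix.dotProduct_mulVec]
  rw [e1]
  set t := y ᵥ* (1 + C * M)⁻¹ with ht
  have e2 : t ᵥ* (1 + C * M) = y := by
    rw [ht, Matrix.vecMul_vecMul, Matrix.nonsing_inv_mul _ g, Matrix.vecMul_one]
  have e3 : t ᵥ* (1 + C * M') = (1 - t ⬝ᵥ (C *ᵥ r)) • s' - c • y' := by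
    have : t ᵥ* (1 + C * M) = t ᵥ* (1 + C * M') + (t ⬝ᵥ (C *ᵥ r)) • s' := by
      rw [hM, Matrix.mul_add, ← add_assoc, Matrix.vecMul_add, ← Matrix.vecMul_vecMul t C,
        Matrix.vecMul_vecMulVec, Matrix.dotProduct_mulVec]
    rw [e2, hy] at this
    rw [eq_sub_of_add_eq this.symm]
    ext i
    simp only [Pi.sub_apply, Pi.smul_apply, smul_eq_mul]
    ring
  have e4 : t = (t ᵥ* (1 + C * M')) ᵥ* (1 + C * M')⁻¹ := by
    rw [Matrix.vecMul_vecMul, Matrix.mul_nonsing_inv _ g', Matrix.vecMul_one]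
  rw [e3, Matrix.sub_vecMul, Matrix.smul_vecMul, Matrix.smul_vecMul] at e4
  exact e4

end LinAlg

variable {N N' : ℕ}

lemma diag_inv_mulVec (d : Fin N → ℂ) (hd : ∀ i, d i ≠ 0) (v : Fin N → ℂ) :
    (Matrix.diagonal d)⁻¹ *ᵥ v = fun i => (d i)⁻¹ * v i := by
  have : (Matrix.diagonal d)⁻¹ = Matrix.diagonal fun i => (d i)⁻¹ := by
    apply Matrix.inv_eq_right_inv
    rw [Matrix.diagonal_mul_diagonal]
    simp [hd]
  rw [this]
  ext i
  rw [Matrix.mulVec_diagonal]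

lemma vecMul_diag_inv (d : Fin N → ℂ) (hd : ∀ i, d i ≠ 0) (v : Fin N → ℂ) :
    v ᵥ* (Matrix.diagonal d)⁻¹ = fun i => v i * (d i)⁻¹ := by
  have : (Matrix.diagonal d)⁻¹ = Matrix.diagonal fun i => (d i)⁻¹ := by
    apply Matrix.inv_eq_right_inv
    rw [Matrix.diagonal_mul_diagonal]
    simp [hd]
  rw [this]
  ext i
  rw [Matrix.vecMul_diagonal]

lemma direction (D : KPData N N') (α β δ : ℂ) (n m h n' m' h' : ℤ)
    (hInv : ∀ n m h : ℤ, IsUnit ((1 + D.M n m h * D.C).det))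
    (hχα : ∀ (n m h : ℤ) (i : Fin N), D.L.chi α (D.κ i) (D.xi n m h) ≠ 0)
    (hχβ : ∀ (n m h : ℤ) (j : Fin N'), D.L.chi β (D.κ' j) (D.xi n m h) ≠ 0)
    (hξ : D.xi n' m' h' = D.xi n m h + δ)
    (hρ : ∀ i, D.ρ i n' m' h' = D.ρ i n m h * D.L.Phi δ (-(D.κ i)) *
      Complex.exp ((D.L.zeta (D.xi n' m' h') - D.L.zeta (D.xi n m h)) * D.κ i))
    (hν : ∀ j, D.ν j n' m' h' * D.L.Phi δ (D.κ' j) = D.ν j n m h *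
      Complex.exp ((D.L.zeta (D.xi n' m' h') - D.L.zeta (D.xi n m h)) * D.κ' j))
    (iM : ∀ i j, D.L.Ind4 (D.xi n m h) δ (D.κ i) (D.κ' j))
    (ir : ∀ i, D.L.Ind4 (D.xi n m h) δ (D.κ i) α)
    (is : ∀ j, D.L.Ind4 (D.xi n m h) δ (D.κ' j) β) :
    (D.u α n' m' h' = (-(D.V α n' m' h')) • D.u0 n m h +
        D.L.chi α δ (D.xi n m h) • D.u α n m h) ∧
    (D.tu β n m h = D.W β n m h • D.tu0 n' m' h' -
        D.L.chi β (-δ) (D.xi n' m' h') • D.tu β n' m' h') := by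
  have hΦ : ∀ j, D.L.Phi δ (D.κ' j) ≠ 0 := by
    intro j
    have s1 := D.L.sigma_ne_zero ((is j).nm 0 1 0 0 δ (by push_cast; ring) (by simp))
    have s2 := D.L.sigma_ne_zero ((is j).nm 0 0 1 0 (D.κ' j) (by push_cast; ring) (by simp))
    have s3 := D.L.sigma_ne_zero ((is j).nm 0 1 1 0 (δ + D.κ' j) (by push_cast; ring) (by simp))
    exact div_ne_zero s3 (mul_ne_zero s1 s2)
  have hν' : ∀ j, D.ν j n' m' h' = D.ν j n m h *
      Complex.exp ((D.L.zeta (D.xi n' m' h') - D.L.zeta (D.xi n m h)) * D.κ' j) /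
        D.L.Phi δ (D.κ' j) := fun j => by rw [← hν j, mul_div_cancel_right₀ _ (hΦ j)]
  have hM : D.M n m h = D.M n' m' h' + vecMulVec (D.r n m h) (D.s n' m' h') := by
    ext i j
    have key := D.L.M_identity (iM i j)
    rw [← hξ] at key
    simp only [M, r, s, Matrix.add_apply, Matrix.of_apply, vecMulVec_apply, hρ, hν',
      EllLattice.Psi]
    have hΦj := hΦ j
    have hc := Complex.exp_ne_zero (D.L.zeta (D.xi n m h) * D.κ i)
    have hc2 := Complex.exp_ne_zero (D.L.zeta (D.xi n m h) * D.κ' j)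
    have hc3 := Complex.exp_ne_zero (D.L.zeta (D.xi n' m' h') * D.κ i)
    have hc4 := Complex.exp_ne_zero (D.L.zeta (D.xi n' m' h') * D.κ' j)
    simp only [mul_add, sub_mul, neg_mul, Complex.exp_add, Complex.exp_sub, Complex.exp_neg]
    field_simp
    linear_combination (D.ρ i n m h * D.ν j n m h) * key
  have hx : (D.DK α n' m' h')⁻¹ *ᵥ D.r n' m' h' =
      - D.r n m h + D.L.chi α δ (D.xi n m h) • ((D.DK α n m h)⁻¹ *ᵥ D.r n m h) := by
    unfold DK
    rw [diag_inv_mulVec _ (hχα n' m' h'), diag_inv_mulVec _ (hχα n m h)]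
    ext i
    have key := D.L.r_identity (ir i) (hχα n m h i) (by rw [← hξ]; exact hχα n' m' h' i)
    rw [← hξ] at key
    simp only [r, Pi.add_apply, Pi.neg_apply, Pi.smul_apply, smul_eq_mul, hρ, EllLattice.Psi]
    have hc := Complex.exp_ne_zero (D.L.zeta (D.xi n m h) * D.κ i)
    have hc3 := Complex.exp_ne_zero (D.L.zeta (D.xi n' m' h') * D.κ i)
    simp only [sub_mul, neg_mul, Complex.exp_sub, Complex.exp_neg]
    generalize Complex.exp (D.L.zeta (D.xi n m h) * D.κ i) = E at *
    generalize Complex.exp (D.L.zeta (D.xi n' m' h') * D.κ i) = E' at *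
    have e : (D.ρ i n m h * D.L.Phi δ (-D.κ i) * (E' / E) *
        (D.L.Phi (D.xi n' m' h') (D.κ i) * E'⁻¹)) =
        D.ρ i n m h * E⁻¹ * (D.L.Phi δ (-D.κ i) * D.L.Phi (D.xi n' m' h') (D.κ i)) := by
      field_simp
    rw [e]
    linear_combination (D.ρ i n m h * E⁻¹) * key
  have hy : D.s n m h ᵥ* (D.DK' β n m h)⁻¹ = D.s n' m' h' -
      D.L.chi β (-δ) (D.xi n' m' h') • (D.s n' m' h' ᵥ* (D.DK' β n' m' h')⁻¹) := by
    unfold DK'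
    rw [vecMul_diag_inv _ (hχβ n' m' h'), vecMul_diag_inv _ (hχβ n m h)]
    ext j
    have key := D.L.s_identity (is j) (hχβ n m h j) (by rw [← hξ]; exact hχβ n' m' h' j)
    rw [← hξ] at key
    simp only [s, Pi.sub_apply, Pi.smul_apply, smul_eq_mul, hν', EllLattice.Psi]
    have hΦj := hΦ j
    have hc := Complex.exp_ne_zero (D.L.zeta (D.xi n m h) * D.κ' j)
    have hc3 := Complex.exp_ne_zero (D.L.zeta (D.xi n' m' h') * D.κ' j)
    simp only [sub_mul, neg_mul, Complex.exp_sub, Complex.exp_neg]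
    generalize Complex.exp (D.L.zeta (D.xi n m h) * D.κ' j) = E at *
    generalize Complex.exp (D.L.zeta (D.xi n' m' h') * D.κ' j) = E' at *
    have e : (D.ν j n m h * (E' / E) / D.L.Phi δ (D.κ' j) *
        (D.L.Phi (D.xi n' m' h') (D.κ' j) * E'⁻¹)) =
        D.ν j n m h * E⁻¹ * (D.L.Phi δ (D.κ' j))⁻¹ * D.L.Phi (D.xi n' m' h') (D.κ' j) := by
      field_simp
    rw [e]
    have e2 : D.ν j n m h * (D.L.Phi (D.xi n m h) (D.κ' j) * E⁻¹) =
        D.ν j n m h * E⁻¹ * (D.L.Phi δ (D.κ' j))⁻¹ *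
          (D.L.Phi δ (D.κ' j) * D.L.Phi (D.xi n m h) (D.κ' j)) := by
      field_simp
    rw [e2]
    linear_combination (D.ν j n m h * E⁻¹ * (D.L.Phi δ (D.κ' j))⁻¹) * key
  constructor
  · exact lin_u _ _ _ _ _ _ _ _ (hInv n m h) (hInv n' m' h') hM hx
  · have := lin_tu _ _ _ _ _ _ _ _ (hInv n m h) (hInv n' m' h') hM hy
    rw [← Matrix.dotProduct_mulVec] at this
    exact this

lemma ind_gen (D : KPData N N') (α β : ℂ) (hgen : D.Generic ![α, β]) (n m h d1 d2 d3 : ℤ)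
    (hd : d1 ≠ 0 ∨ d2 ≠ 0 ∨ d3 ≠ 0) (δ : ℂ) (hδ : δ = d1 * D.del + d2 * D.eps + d3 * D.lam) :
    (∀ i j, D.L.Ind4 (D.xi n m h) δ (D.κ i) (D.κ' j)) ∧
    (∀ i, D.L.Ind4 (D.xi n m h) δ (D.κ i) α) ∧
    (∀ j, D.L.Ind4 (D.xi n m h) δ (D.κ' j) β) := by
  have aux : ∀ a b : ℤ, a = 0 → a * n + b * d1 = 0 → a * m + b * d2 = 0 → a * h + b * d3 = 0 →
      b = 0 := by
    intro a b ha h1 h2 h3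
    subst ha
    simp only [zero_mul, zero_add, mul_eq_zero] at h1 h2 h3
    tauto
  refine ⟨fun i j a b c d h0 => ?_, fun i a b c d h0 => ?_, fun j a b c d h0 => ?_⟩
  · have := hgen a (a * n + b * d1) (a * m + b * d2) (a * h + b * d3) (Pi.single i c)
      (Pi.single j d) 0 (by
        rintro ⟨h1, h2, h3, h4, h5, h6, -⟩
        exact h0 ⟨h1, aux a b h1 h2 h3 h4, by simpa using h5, by simpa using h6⟩)
    convert this using 2
    simp [Pi.single_apply, xi, hδ]
    ring
  · have := hgen a (a * n + b * d1) (a * m + b * d2) (a * h + b * d3) (Pi.single i c)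
      0 ![d, 0] (by
        rintro ⟨h1, h2, h3, h4, h5, -, h6⟩
        exact h0 ⟨h1, aux a b h1 h2 h3 h4, by simpa using h5, by simpa using congrFun h6 0⟩)
    convert this using 2
    simp [Pi.single_apply, xi, hδ]
    ring
  · have := hgen a (a * n + b * d1) (a * m + b * d2) (a * h + b * d3) 0
      (Pi.single j c) ![0, d] (by
        rintro ⟨h1, h2, h3, h4, -, h5, h6⟩
        exact h0 ⟨h1, aux a b h1 h2 h3 h4, by simpa using h5, by simpa using congrFun h6 1⟩)
    convert this using 2
    simp [Pi.single_apply, xi, hδ]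
    ring

lemma wave_r (L : EllLattice) (δ κ : ℂ) : Complex.exp (-(L.zeta δ) * κ) * L.Psi δ (-κ) =
    L.Phi δ (-κ) := by
  have : Complex.exp (-(L.zeta δ) * κ) * Complex.exp (-(L.zeta δ) * -κ) = 1 := by
    rw [← Complex.exp_add]; simp
  unfold EllLattice.Psi
  linear_combination (L.Phi δ (-κ)) * this

lemma wave_s (L : EllLattice) (δ κ : ℂ) : Complex.exp (L.zeta δ * κ) * L.Psi δ κ =
    L.Phi δ κ := by
  have : Complex.exp (L.zeta δ * κ) * Complex.exp (-(L.zeta δ) * κ) = 1 := by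
    rw [← Complex.exp_add]; simp
  unfold EllLattice.Psi
  linear_combination (L.Phi δ κ) * this

lemma exp_step (a b k : ℂ) : Complex.exp (a * k) = Complex.exp (b * k) *
    Complex.exp ((a - b) * k) := by
  rw [← Complex.exp_add]; congr 1; ring

lemma Phi_ne (L : EllLattice) {ξ δ κ α : ℂ} (h : L.Ind4 ξ δ κ α) :
    L.Phi δ κ ≠ 0 ∧ L.Phi δ (-κ) ≠ 0 := by
  have s1 := L.sigma_ne_zero (h.nm 0 1 0 0 δ (by push_cast; ring) (by simp))
  have s2 := L.sigma_ne_zero (h.nm 0 0 1 0 κ (by push_cast; ring) (by simp))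
  have s3 := L.sigma_ne_zero (h.nm 0 1 1 0 (δ + κ) (by push_cast; ring) (by simp))
  have s4 := L.sigma_ne_zero (h.nm 0 1 (-1) 0 (δ + -κ) (by push_cast; ring) (by simp))
  have s5 := L.sigma_ne_zero (h.nm 0 0 (-1) 0 (-κ) (by push_cast; ring) (by simp))
  exact ⟨div_ne_zero s3 (mul_ne_zero s1 s2), div_ne_zero s4 (mul_ne_zero s1 s5)⟩

end KPData


/-- Linear shift relations for the eigenvector `u_α` and the adjoint vector `ᵗu_β`:
`ũ_α = −u₀ Ṽ_α + χ_{α,δ}(ξ) u_α` and `ᵗu_β = W_β ᵗũ₀ − χ_{β,−δ}(ξ+δ) ᵗũ_β`,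
together with the analogous relations in the other two lattice directions. -/
theorem u_vectors_shift_relations {N N' : ℕ} (D : KPData N N') (α β : ℂ)
    (hρ0 : ∀ i, D.ρ0 i ≠ 0) (hν0 : ∀ j, D.ν0 j ≠ 0)
    (hgen : D.Generic ![α, β])
    (hInv : ∀ n m h : ℤ, IsUnit ((1 + D.M n m h * D.C).det))
    (hχα : ∀ (n m h : ℤ) (i : Fin N), D.L.chi α (D.κ i) (D.xi n m h) ≠ 0)
    (hχβ : ∀ (n m h : ℤ) (j : Fin N'), D.L.chi β (D.κ' j) (D.xi n m h) ≠ 0) :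
    ∀ n m h : ℤ,
      (D.u α (n + 1) m h =
        (-(D.V α (n + 1) m h)) • D.u0 n m h +
          D.L.chi α D.del (D.xi n m h) • D.u α n m h) ∧
      (D.tu β n m h =
        D.W β n m h • D.tu0 (n + 1) m h -
          D.L.chi β (-D.del) (D.xi (n + 1) m h) • D.tu β (n + 1) m h) ∧
      (D.u α n (m + 1) h =
        (-(D.V α n (m + 1) h)) • D.u0 n m h +
          D.L.chi α D.eps (D.xi n m h) • D.u α n m h) ∧
      (D.tu β n m h =
        D.W β n m h • D.tu0 n (m + 1) h -
          D.L.chi β (-D.eps) (D.xi n (m + 1) h) • D.tu β n (m + 1) h) ∧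
      (D.u α n m (h + 1) =
        (-(D.V α n m (h + 1))) • D.u0 n m h +
          D.L.chi α D.lam (D.xi n m h) • D.u α n m h) ∧
      (D.tu β n m h =
        D.W β n m h • D.tu0 n m (h + 1) -
          D.L.chi β (-D.lam) (D.xi n m (h + 1)) • D.tu β n m (h + 1)) := by
  intro n m h
  obtain ⟨a1, a2, a3⟩ := D.ind_gen α β hgen n m h 1 0 0 (by simp) D.del (by simp)
  obtain ⟨b1, b2, b3⟩ := D.ind_gen α β hgen n m h 0 1 0 (by simp) D.eps (by simp)
  obtain ⟨c1, c2, c3⟩ := D.ind_gen α β hgen n m h 0 0 1 (by simp) D.lam (by simp)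
  have hn := D.direction α β D.del n m h (n + 1) m h hInv hχα hχβ
    (by simp [KPData.xi]; ring)
    (fun i => by
      have := (KPData.Phi_ne D.L (a2 i)).2
      simp only [KPData.ρ, KPData.wave_r]
      rw [zpow_add_one₀ this, KPData.exp_step _ (D.L.zeta (D.xi n m h))]
      ring)
    (fun j => by
      have := (KPData.Phi_ne D.L (a3 j)).1
      simp only [KPData.ν, KPData.wave_s]
      rw [neg_add, zpow_add₀ this, KPData.exp_step _ (D.L.zeta (D.xi n m h)), _root_.zpow_neg_one]
      field_simp)
    a1 a2 a3
  have hm := D.direction α β D.eps n m h n (m + 1) h hInv hχα hχβ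
    (by simp [KPData.xi]; ring)
    (fun i => by
      have := (KPData.Phi_ne D.L (b2 i)).2
      simp only [KPData.ρ, KPData.wave_r]
      rw [zpow_add_one₀ this, KPData.exp_step _ (D.L.zeta (D.xi n m h))]
      ring)
    (fun j => by
      have := (KPData.Phi_ne D.L (b3 j)).1
      simp only [KPData.ν, KPData.wave_s]
      rw [neg_add, zpow_add₀ this, KPData.exp_step _ (D.L.zeta (D.xi n m h)), _root_.zpow_neg_one]
      field_simp)
    b1 b2 b3
  have hh := D.direction α β D.lam n m h n m (h + 1) hInv hχα hχβ
    (by simp [KPData.xi]; ring)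
    (fun i => by
      have := (KPData.Phi_ne D.L (c2 i)).2
      simp only [KPData.ρ, KPData.wave_r]
      rw [zpow_add_one₀ this, KPData.exp_step _ (D.L.zeta (D.xi n m h))]
      ring)
    (fun j => by
      have := (KPData.Phi_ne D.L (c3 j)).1
      simp only [KPData.ν, KPData.wave_s]
      rw [neg_add, zpow_add₀ this, KPData.exp_step _ (D.L.zeta (D.xi n m h)), _root_.zpow_neg_one]
      field_simp)
    c1 c2 c3
  exact ⟨hn.1, hn.2, hm.1, hm.2, hh.1, hh.2⟩
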